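/- The 3×3 integer matrix A_{3,0} = [[2,-2,-2],[-2,2,-1],[-2,-1,2]] satisfies: (a) it is a symmetric generalized Cartan matrix (symmetric, all diagonal entries 2, all off-diagonal entries nonpositive); (b) it has rank 3 over ℚ; (c) the real quadratic form x ↦ xᵀAx on ℝ³ is equivalent to the weighted sum of squares with weights (1,1,−1), i.e. A is hyperbolic of rank 3; (d) there exists c ∈ ℚ³ with Ac = −(1,1,1)ᵀ and cᵀAc < 0 (a lattice Weyl vector of negative square). -/

import Mathlib

open Matrix

/-!
Every claim reduces to arithmetic over `ℤ`. The vectors `(0, 1, -1)`, `(1, 0, 0)`, `(2, 1, 1)` are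
pairwise orthogonal for the form and have norms `6`, `2`, `-6`; rescaling each of them by the
inverse square root of the absolute value of its norm gives the signature `(1, 1, -1)`. The Weyl
vector is `(5, 4, 4) / 6`, because `A` sends `(5, 4, 4)` to `(-6, -6, -6)`; whenever
`A c = -(1, …, 1)`, the norm of `c` is minus the sum of its entries, hence negative here.
-/

section Congruence

variable {n R S : Type*} [Fintype n] [DecidableEq n]

/-- Congruence of square matrices, the matrix form of equivalence of bilinear forms: `B` is the
Gram matrix of the form `A` in the basis given by the columns of `P`. -/
def IsCongruent [CommRing R] (A B : Matrix n n R) : Prop :=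
  ∃ P : Matrix n n R, IsUnit P.det ∧ Pᵀ * A * P = B

theorem IsCongruent.trans [CommRing R] {A B C : Matrix n n R} (hAB : IsCongruent A B)
    (hBC : IsCongruent B C) : IsCongruent A C := by
  obtain ⟨P, hP, rfl⟩ := hAB
  obtain ⟨Q, hQ, rfl⟩ := hBC
  refine ⟨P * Q, ?_, ?_⟩
  · rw [det_mul]
    exact hP.mul hQ
  · simp only [transpose_mul, Matrix.mul_assoc]

theorem det_map_ne_zero [CommRing R] [CommRing S] {f : R →+* S} (hf : Function.Injective f)
    {A : Matrix n n R} (hA : A.det ≠ 0) : (A.map f).det ≠ 0 := by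
  rw [← RingHom.mapMatrix_apply, ← RingHom.map_det]
  exact (map_ne_zero_iff f hf).2 hA

theorem isCongruent_map_of_transpose_mul_mul_eq [CommRing R] [Field S] {f : R →+* S}
    (hf : Function.Injective f) {A B Q : Matrix n n R} (hQ : Q.det ≠ 0) (h : Qᵀ * A * Q = B) :
    IsCongruent (A.map f) (B.map f) := by
  refine ⟨Q.map f, (det_map_ne_zero hf hQ).isUnit, ?_⟩
  rw [← h, Matrix.map_mul, Matrix.map_mul, transpose_map]

theorem exists_ne_zero_mul_mul_self_eq_sign (a : ℝ) :
    ∃ s : ℝ, s ≠ 0 ∧ s * a * s = SignType.sign a := by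
  obtain rfl | ha := eq_or_ne a 0
  · exact ⟨1, one_ne_zero, by simp⟩
  · have hsqrt : √|a| ≠ 0 := (Real.sqrt_pos.2 (abs_pos.2 ha)).ne'
    refine ⟨(√|a|)⁻¹, inv_ne_zero hsqrt, ?_⟩
    calc
      (√|a|)⁻¹ * a * (√|a|)⁻¹ = a / (√|a| * √|a|) := by field_simp
      _ = a / |a| := by rw [Real.mul_self_sqrt (abs_nonneg a)]
      _ = SignType.sign a := by rw [div_eq_iff (abs_ne_zero.2 ha), sign_mul_abs]

theorem isCongruent_diagonal_sign (d : n → ℝ) :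
    IsCongruent (diagonal d) (diagonal fun i => (SignType.sign (d i) : ℝ)) := by
  choose s hs hsign using fun i => exists_ne_zero_mul_mul_self_eq_sign (d i)
  refine ⟨diagonal s, ?_, ?_⟩
  · rw [det_diagonal]
    exact (Finset.prod_ne_zero_iff.2 fun i _ => hs i).isUnit
  · simp only [diagonal_transpose, diagonal_mul_diagonal, hsign]

theorem isCongruent_map_diagonal_sign [CommRing R] {f : R →+* ℝ} (hf : Function.Injective f)
    {A Q : Matrix n n R} {d : n → R} (hQ : Q.det ≠ 0) (h : Qᵀ * A * Q = diagonal d) :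
    IsCongruent (A.map f) (diagonal fun i => (SignType.sign (f (d i)) : ℝ)) := by
  have hdiag := isCongruent_map_of_transpose_mul_mul_eq hf hQ h
  rw [diagonal_map (map_zero f)] at hdiag
  exact hdiag.trans (isCongruent_diagonal_sign _)

end Congruence

section WeylVector

variable {n R K : Type*} [Fintype n]

theorem dotProduct_mulVec_eq_neg_sum [NonAssocRing R] {A : Matrix n n R} {c : n → R}
    (hc : ∀ i, (A *ᵥ c) i = -1) : c ⬝ᵥ A *ᵥ c = -∑ i, c i := by
  simp only [dotProduct, hc, mul_neg_one, Finset.sum_neg_distrib]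

theorem exists_mulVec_eq_neg_one_of_int [Field K] [LinearOrder K] [IsStrictOrderedRing K]
    {A : Matrix n n ℤ} {v : n → ℤ} {m : ℤ} (hm : 0 < m) (hv : ∀ i, (A *ᵥ v) i = -m)
    (hsum : 0 < ∑ i, v i) :
    ∃ c : n → K, (∀ i, (A.map ((↑·) : ℤ → K) *ᵥ c) i = -1) ∧
      c ⬝ᵥ A.map ((↑·) : ℤ → K) *ᵥ c < 0 := by
  have hmK : (0 : K) < m := Int.cast_pos.2 hm
  let c : n → K := (m : K)⁻¹ • fun j => (v j : K)
  have hc (i : n) : (A.map ((↑·) : ℤ → K) *ᵥ c) i = -1 :=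
    calc
      (A.map ((↑·) : ℤ → K) *ᵥ c) i = (m : K)⁻¹ * ((A *ᵥ v) i : ℤ) := by
        rw [mulVec_smul, Pi.smul_apply, smul_eq_mul]
        exact congrArg _ ((Int.castRingHom K).map_mulVec A v i).symm
      _ = -1 := by rw [hv, Int.cast_neg, mul_neg, inv_mul_cancel₀ hmK.ne']
  have hc_sum : ∑ i, c i = (m : K)⁻¹ * (∑ i, v i : ℤ) := by
    rw [Int.cast_sum, Finset.mul_sum]
    rfl
  refine ⟨c, hc, ?_⟩
  rw [dotProduct_mulVec_eq_neg_sum hc, neg_lt_zero, hc_sum]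
  exact mul_pos (inv_pos.2 hmK) (Int.cast_pos.2 hsum)

end WeylVector

/-- The matrix `A_{3,0}` from Nikulin's list of all twelve symmetric hyperbolic
generalized Cartan matrices of rank 3 with finite-volume fundamental chamber and
lattice Weyl vector of negative square:
(a) it is a symmetric generalized Cartan matrix;
(b) it has rank 3 over ℚ;
(c) the real quadratic form x ↦ xᵀAx is equivalent to the weighted sum of squares with
    weights (1,1,-1,0,…,0), i.e. A is hyperbolic of rank 3;
(d) it has a lattice Weyl vector of negative square: there is c ∈ ℚ^3 with
    Ac = -(1,…,1)ᵀ and cᵀAc < 0. -/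
theorem stmt_8 :
    let A : Matrix (Fin 3) (Fin 3) ℤ :=
      !![2, -2, -2;
        -2, 2, -1;
        -2, -1, 2]
    -- (a) symmetric generalized Cartan matrix
    (Aᵀ = A ∧ (∀ i, A i i = 2) ∧ (∀ i j, i ≠ j → A i j ≤ 0)) ∧
    -- (b) rank 3 over ℚ
    (A.map ((↑·) : ℤ → ℚ)).rank = 3 ∧
    -- (c) hyperbolic of rank 3: x ↦ xᵀAx over ℝ is equivalent to the weighted
    -- sum of squares with weights (1,1,-1,0,…,0)
    (∃ P : Matrix (Fin 3) (Fin 3) ℝ, IsUnit P.det ∧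
      Pᵀ * A.map ((↑·) : ℤ → ℝ) * P = Matrix.diagonal ![(1:ℝ),1,-1]) ∧
    -- (d) lattice Weyl vector of negative square
    (∃ c : Fin 3 → ℚ, (∀ i, (A.map ((↑·) : ℤ → ℚ)).mulVec c i = -1) ∧
      c ⬝ᵥ (A.map ((↑·) : ℤ → ℚ)).mulVec c < 0) := by
  intro A
  let Q : Matrix (Fin 3) (Fin 3) ℤ := !![0, 1, 2; 1, 0, 1; -1, 0, 1]
  have hA_nonpos : ∀ i j, i ≠ j → A i j ≤ 0 := by simp [A, Fin.forall_fin_succ]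
  have hA_det : A.det ≠ 0 := by decide
  have hQ_det : Q.det ≠ 0 := by decide
  have hQ : Qᵀ * A * Q = diagonal ![6, 2, -6] := by decide
  have hA_congr : IsCongruent (A.map (Int.castRingHom ℝ)) (diagonal ![1, 1, -1]) := by
    convert isCongruent_map_diagonal_sign (f := Int.castRingHom ℝ) Int.cast_injective hQ_det hQ
      using 2
    ext i
    fin_cases i <;> simp
  refine ⟨⟨by decide, by decide, hA_nonpos⟩, ?_, hA_congr, ?_⟩
  · exact rank_of_det_ne_zero (det_map_ne_zero (f := Int.castRingHom ℚ) Int.cast_injective hA_det)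
  · exact exists_mulVec_eq_neg_one_of_int (v := ![5, 4, 4]) (m := 6)
      (by decide) (by decide) (by decide)
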